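/- arXiv:1404.0214 — 11 statements merged into one kernel-verified Lean document; each statement's English description precedes it below -/
import Mathlib

section
/- For every real number d > 0 and every real ρ with ρ > arsinh d, the function x ↦ d / √(sinh² x − d²) is Lebesgue integrable on the half-open interval (arsinh d, ρ] (despite the inverse-square-root singularity at the left endpoint x = arsinh d). -/
/-! The function `sinh²` is convex and has positive slope at `arsinh d`, where it equals `d²`. It
lies above its tangent line there, so `sinh² x - d²` grows at least linearly in `x - arsinh d` and
its inverse square root is dominated by a multiple of `(x - arsinh d) ^ (-1 / 2)`, which is
integrable. -/

open MeasureTheory Real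

section PowerSingularity

open Set

variable {f : ℝ → ℝ} {a b c f' r : ℝ}

theorem integrableOn_Ioc_sub_rpow (hr : -1 < r) :
    IntegrableOn (fun x => (x - a) ^ r) (Ioc a b) := by
  have hshift : IntervalIntegrable (fun x => (x - a) ^ r) volume a b := by
    simpa using
      (intervalIntegral.intervalIntegrable_rpow' (a := 0) (b := b - a) hr).comp_sub_right a
  exact hshift.1

theorem integrableOn_Ioc_rpow_of_mul_sub_le
    (hf : AEStronglyMeasurable f (volume.restrict (Ioc a b))) (hc : 0 < c)
    (hle : ∀ x ∈ Ioc a b, c * (x - a) ≤ f x) (hr : -1 < r) (hr₀ : r ≤ 0) :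
    IntegrableOn (fun x => f x ^ r) (Ioc a b) := by
  have hdom : IntegrableOn (fun x => c ^ r * (x - a) ^ r) (Ioc a b) :=
    (integrableOn_Ioc_sub_rpow hr).const_mul _
  refine hdom.mono' (hf.aemeasurable.pow_const r).aestronglyMeasurable ?_
  filter_upwards [ae_restrict_mem measurableSet_Ioc] with x hx
  have hsub : 0 < x - a := sub_pos.2 hx.1
  have hlin : 0 < c * (x - a) := mul_pos hc hsub
  calc ‖f x ^ r‖ = f x ^ r := norm_of_nonneg (rpow_nonneg (hlin.le.trans (hle x hx)) r)
    _ ≤ (c * (x - a)) ^ r := rpow_le_rpow_of_nonpos hlin (hle x hx) hr₀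
    _ = c ^ r * (x - a) ^ r := mul_rpow hc.le hsub.le

theorem mul_sub_le_sub_of_convexOn_Icc (hf : ConvexOn ℝ (Icc a b) f)
    (hderiv : HasDerivWithinAt f f' (Ioi a) a) {x : ℝ} (hx : x ∈ Ioc a b) :
    f' * (x - a) ≤ f x - f a := by
  have hslope : f' ≤ slope f a x :=
    hf.le_slope_of_hasDerivWithinAt_Ioi (left_mem_Icc.2 (hx.1.le.trans hx.2))
      (Ioc_subset_Icc_self hx) hx.1 hderiv
  rwa [slope_def_field, le_div_iff₀ (sub_pos.2 hx.1)] at hslope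

theorem aestronglyMeasurable_restrict_Ioc_of_convexOn_Icc (hf : ConvexOn ℝ (Icc a b) f) :
    AEStronglyMeasurable f (volume.restrict (Ioc a b)) := by
  have hcont : ContinuousOn f (Ioo a b) := by
    simpa only [interior_Icc] using hf.continuousOn_interior
  rw [← restrict_Ioo_eq_restrict_Ioc]
  exact hcont.aestronglyMeasurable measurableSet_Ioo

theorem integrableOn_Ioc_sub_rpow_of_convexOn_Icc (hf : ConvexOn ℝ (Icc a b) f)
    (hderiv : HasDerivWithinAt f f' (Ioi a) a) (hf' : 0 < f') (hr : -1 < r) (hr₀ : r ≤ 0) :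
    IntegrableOn (fun x => (f x - f a) ^ r) (Ioc a b) :=
  integrableOn_Ioc_rpow_of_mul_sub_le
    ((aestronglyMeasurable_restrict_Ioc_of_convexOn_Icc hf).sub aestronglyMeasurable_const) hf'
    (fun _ hx => mul_sub_le_sub_of_convexOn_Icc hf hderiv hx) hr hr₀

end PowerSingularity

theorem hasDerivAt_sinh_sq (x : ℝ) : HasDerivAt (fun y => sinh y ^ 2) (sinh (2 * x)) x := by
  simpa [sinh_two_mul] using (hasDerivAt_sinh x).fun_pow 2

theorem convexOn_sinh_sq : ConvexOn ℝ Set.univ fun x => sinh x ^ 2 := by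
  refine Monotone.convexOn_univ_of_deriv (fun x => (hasDerivAt_sinh_sq x).differentiableAt) ?_
  rw [deriv_eq hasDerivAt_sinh_sq]
  exact sinh_strictMono.monotone.comp (monotone_id.const_mul zero_le_two)

theorem catenoid_height_integrand_integrableOn_Ioc
    (d ρ : ℝ) (hd : 0 < d) (hρ : Real.arsinh d < ρ) :
    MeasureTheory.IntegrableOn
      (fun x => d / Real.sqrt (Real.sinh x ^ 2 - d ^ 2))
      (Set.Ioc (Real.arsinh d) ρ) := by
  have hconvex : ConvexOn ℝ (Set.Icc (arsinh d) ρ) fun x => sinh x ^ 2 :=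
    convexOn_sinh_sq.subset (Set.subset_univ _) (convex_Icc _ _)
  have hslope : 0 < sinh (2 * arsinh d) :=
    sinh_pos_iff.2 (mul_pos two_pos (arsinh_pos_iff.2 hd))
  have hpow : IntegrableOn (fun x => (sinh x ^ 2 - d ^ 2) ^ (-(1 / 2) : ℝ))
      (Set.Ioc (arsinh d) ρ) := by
    simpa only [sinh_arsinh] using integrableOn_Ioc_sub_rpow_of_convexOn_Icc hconvex
      (hasDerivAt_sinh_sq _).hasDerivWithinAt hslope (by norm_num) (by norm_num)
  refine IntegrableOn.congr_fun (hpow.const_mul d) (fun x hx => ?_) measurableSet_Ioc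
  have hsinh : d ≤ sinh x := by simpa only [sinh_arsinh] using sinh_le_sinh.2 hx.1.le
  have hnonneg : 0 ≤ sinh x ^ 2 - d ^ 2 := sub_nonneg.2 (pow_le_pow_left₀ hd.le hsinh 2)
  simp only [sqrt_eq_rpow, rpow_neg hnonneg, div_eq_mul_inv]
end

section
/- For every real number d > 0, the function x ↦ d / √(sinh² x − d²) is Lebesgue integrable on the open interval (arsinh d, ∞); consequently the quantity h(d) = ∫_{(arsinh d, ∞)} d/√(sinh² x − d²) dx is finite. -/
open MeasureTheory Real

open Set Filter Topology

/-!
The exact derivative `(arccos (d / sinh x))' = d cosh x / (sinh x √(sinh² x - d²))` is nonnegative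
on `(arsinh d, ∞)` and its primitive has the finite limit `π / 2` at infinity, so it is integrable
there, in spite of the singularity at `arsinh d`. Since `sinh < cosh`, it dominates
`d / √(sinh² x - d²)`.
-/

theorem sqrt_one_sub_div_sq {y : ℝ} (hy : 0 < y) (d : ℝ) :
    √(1 - (d / y) ^ 2) = √(y ^ 2 - d ^ 2) / y := by
  have hquot : 1 - (d / y) ^ 2 = (y ^ 2 - d ^ 2) / y ^ 2 := by field_simp
  rw [hquot, sqrt_div' _ (sq_nonneg y), sqrt_sq hy.le]

theorem hasDerivAt_arccos_const_div {f : ℝ → ℝ} {f' d x : ℝ} (hf : HasDerivAt f f' x)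
    (hlt : |d| < f x) :
    HasDerivAt (fun y => arccos (d / f y)) (d * f' / (f x * √(f x ^ 2 - d ^ 2))) x := by
  have hfx : 0 < f x := (abs_nonneg d).trans_lt hlt
  have hquot : |d / f x| < 1 := by rwa [abs_div, abs_of_pos hfx, div_lt_one hfx]
  have hsqrt : 0 < √(f x ^ 2 - d ^ 2) :=
    sqrt_pos.2 (sub_pos.2 (sq_lt_sq.2 (by rwa [abs_of_pos hfx])))
  have hderiv := (hasDerivAt_arccos (abs_lt.1 hquot).1.ne' (abs_lt.1 hquot).2.ne).comp x
    ((hasDerivAt_const x d).fun_div hf hfx.ne')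
  refine hderiv.congr_deriv ?_
  rw [sqrt_one_sub_div_sq hfx]
  field_simp
  ring

theorem integrableOn_Ioi_mul_deriv_div_mul_sqrt_sq_sub_sq {f f' : ℝ → ℝ} {a d : ℝ} (hd : 0 < d)
    (hcont : ContinuousWithinAt f (Ici a) a) (hderiv : ∀ x ∈ Ioi a, HasDerivAt f (f' x) x)
    (hf' : ∀ x ∈ Ioi a, 0 ≤ f' x) (hlt : ∀ x ∈ Ioi a, d < f x) (hf : Tendsto f atTop atTop) :
    IntegrableOn (fun x => d * f' x / (f x * √(f x ^ 2 - d ^ 2))) (Ioi a) := by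
  have hda : d ≤ f a := ge_of_tendsto (hcont.mono Ioi_subset_Ici_self)
    (eventually_mem_nhdsWithin.mono fun x hx => (hlt x hx).le)
  have hlim : Tendsto (fun x => arccos (d / f x)) atTop (𝓝 (arccos 0)) :=
    (continuous_arccos.tendsto 0).comp (hf.const_div_atTop d)
  refine integrableOn_Ioi_deriv_of_nonneg (g := fun x => arccos (d / f x)) ?_
    (fun x hx => ?_) (fun x hx => ?_) hlim
  · exact continuous_arccos.continuousAt.comp_continuousWithinAt
      (continuousWithinAt_const.div hcont (hd.trans_le hda).ne')
  · exact hasDerivAt_arccos_const_div (hderiv x hx) (by simpa only [abs_of_pos hd] using hlt x hx)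
  · exact div_nonneg (mul_nonneg hd.le (hf' x hx))
      (mul_nonneg (hd.trans (hlt x hx)).le (sqrt_nonneg _))

theorem catenoid_height_integrand_integrableOn_Ioi
    (d : ℝ) (hd : 0 < d) :
    MeasureTheory.IntegrableOn
      (fun x => d / Real.sqrt (Real.sinh x ^ 2 - d ^ 2))
      (Set.Ioi (Real.arsinh d)) := by
  have hlt : ∀ x ∈ Ioi (arsinh d), d < sinh x := fun _ hx => sinhOrderIso.symm_apply_lt.1 hx
  have hmajorant : IntegrableOn (fun x => d * cosh x / (sinh x * √(sinh x ^ 2 - d ^ 2)))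
      (Ioi (arsinh d)) :=
    integrableOn_Ioi_mul_deriv_div_mul_sqrt_sq_sub_sq hd continuous_sinh.continuousWithinAt
      (fun x _ => hasDerivAt_sinh x) (fun x _ => (cosh_pos x).le) hlt sinhOrderIso.tendsto_atTop
  refine hmajorant.mono' (Measurable.aestronglyMeasurable (by fun_prop))
    (ae_restrict_of_forall_mem measurableSet_Ioi fun x hx => ?_)
  have hsinh : 0 < sinh x := hd.trans (hlt x hx)
  calc ‖d / √(sinh x ^ 2 - d ^ 2)‖
      = d / √(sinh x ^ 2 - d ^ 2) := norm_of_nonneg (by positivity)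
    _ = d * sinh x / (sinh x * √(sinh x ^ 2 - d ^ 2)) := by
      rw [mul_comm d, mul_div_mul_left _ _ hsinh.ne']
    _ ≤ d * cosh x / (sinh x * √(sinh x ^ 2 - d ^ 2)) := by
      gcongr
      exact (sinh_lt_cosh x).le
end

section
/- For every real number d > 0, one has ∫_{(arsinh d, ∞)} d/√(sinh² x − d²) dx < π/2; that is, the asymptotic half-height h(d) of the minimal catenoid C_d is strictly less than π/2, so every catenoid C_d has total height 2·h(d) strictly less than π. -/
open MeasureTheory Real

/-! Multiplying the integrand by `coth x > 1` makes it explicitly integrable: the substitution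
`u = sinh x` turns `coth x * d / √(sinh² x - d²) dx` into `d / (u √(u² - d²)) du`, which is the
differential of `-arcsin (d / u)`. That function increases from `-π / 2` at `u = d` to `0` at
infinity, so the original integral is strictly below `π / 2`. -/

open Set Filter Topology

theorem integral_lt_integral_of_ae_lt {α : Type*} [MeasurableSpace α] {μ : Measure α} [NeZero μ]
    {f g : α → ℝ} (hf : Integrable f μ) (hg : Integrable g μ) (hfg : ∀ᵐ x ∂μ, f x < g x) :
    ∫ x, f x ∂μ < ∫ x, g x ∂μ := by
  have hle : f ≤ᵐ[μ] g := hfg.mono fun _ hx => hx.le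
  refine (integral_mono_ae hf hg hle).lt_of_ne fun heq => ?_
  obtain ⟨x, hlt, hx⟩ := (hfg.and ((integral_eq_iff_of_ae_le hf hg hle).1 heq)).exists
  exact hlt.ne hx

section SinhSubstitution

variable {E : Type*} [NormedAddCommGroup E] [NormedSpace ℝ E]

theorem sinh_image_Ioi (a : ℝ) : sinh '' Ioi a = Ioi (sinh a) :=
  sinhOrderIso.image_Ioi a

theorem integrableOn_Ioi_cosh_smul_comp_sinh_iff (g : ℝ → E) (a : ℝ) :
    IntegrableOn (fun x => cosh x • g (sinh x)) (Ioi a) ↔ IntegrableOn g (Ioi (sinh a)) := by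
  rw [← sinh_image_Ioi, integrableOn_image_iff_integrableOn_deriv_smul_of_monotoneOn
    measurableSet_Ioi (fun x _ => (hasDerivAt_sinh x).hasDerivWithinAt)
    (sinh_strictMono.monotone.monotoneOn _)]

theorem integral_Ioi_cosh_smul_comp_sinh (g : ℝ → E) (a : ℝ) :
    ∫ x in Ioi a, cosh x • g (sinh x) = ∫ u in Ioi (sinh a), g u := by
  rw [← sinh_image_Ioi, integral_image_eq_integral_deriv_smul_of_monotoneOn
    measurableSet_Ioi (fun x _ => (hasDerivAt_sinh x).hasDerivWithinAt)
    (sinh_strictMono.monotone.monotoneOn _)]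

end SinhSubstitution

section ArcsinConstDiv

variable {a c : ℝ}

theorem hasDerivAt_neg_arcsin_const_div {u : ℝ} (hu : |c| < u) :
    HasDerivAt (fun y => -arcsin (c / y)) (c / (u * √(u ^ 2 - c ^ 2))) u := by
  have hu₀ : 0 < u := (abs_nonneg c).trans_lt hu
  obtain ⟨hneg, hlt⟩ := abs_lt.1 hu
  have hsqrt : √(1 - (c / u) ^ 2) = √(u ^ 2 - c ^ 2) / u := by
    rw [show 1 - (c / u) ^ 2 = (u ^ 2 - c ^ 2) / u ^ 2 by field_simp,
      sqrt_div' _ (sq_nonneg u), sqrt_sq hu₀.le]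
  have hdiv : HasDerivAt (fun y => c / y) (-c / u ^ 2) u := by
    simpa using (hasDerivAt_const u c).fun_div (hasDerivAt_id' u) hu₀.ne'
  have harcsin : HasDerivAt arcsin (1 / √(1 - (c / u) ^ 2)) (c / u) :=
    hasDerivAt_arcsin (by rw [ne_eq, div_eq_iff hu₀.ne']; linarith) ((div_lt_one hu₀).2 hlt).ne
  refine (harcsin.comp u hdiv).neg.congr_deriv ?_
  rw [hsqrt]
  field_simp

theorem continuousAt_neg_arcsin_const_div (ha : a ≠ 0) :
    ContinuousAt (fun y => -arcsin (c / y)) a :=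
  (continuous_arcsin.continuousAt.comp (continuousAt_const.div continuousAt_id ha)).neg

theorem tendsto_neg_arcsin_const_div_atTop (c : ℝ) :
    Tendsto (fun y => -arcsin (c / y)) atTop (𝓝 0) := by
  simpa using ((continuous_arcsin.tendsto 0).comp (tendsto_id.const_div_atTop c)).neg

theorem integrableOn_Ioi_div_mul_sqrt_sq_sub_sq (hc : 0 ≤ c) (ha : 0 < a) (hca : c ≤ a) :
    IntegrableOn (fun u => c / (u * √(u ^ 2 - c ^ 2))) (Ioi a) :=
  integrableOn_Ioi_deriv_of_nonneg (continuousAt_neg_arcsin_const_div ha.ne').continuousWithinAt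
    (fun _ hu => hasDerivAt_neg_arcsin_const_div ((abs_of_nonneg hc).trans_lt (hca.trans_lt hu)))
    (fun _ hu => div_nonneg hc (mul_nonneg (ha.trans hu).le (sqrt_nonneg _)))
    (tendsto_neg_arcsin_const_div_atTop c)

theorem integral_Ioi_div_mul_sqrt_sq_sub_sq (hc : 0 ≤ c) (ha : 0 < a) (hca : c ≤ a) :
    ∫ u in Ioi a, c / (u * √(u ^ 2 - c ^ 2)) = arcsin (c / a) := by
  rw [integral_Ioi_of_hasDerivAt_of_tendsto
    (continuousAt_neg_arcsin_const_div ha.ne').continuousWithinAt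
    (fun _ hu => hasDerivAt_neg_arcsin_const_div ((abs_of_nonneg hc).trans_lt (hca.trans_lt hu)))
    (integrableOn_Ioi_div_mul_sqrt_sq_sub_sq hc ha hca) (tendsto_neg_arcsin_const_div_atTop c),
    zero_sub, neg_neg]

end ArcsinConstDiv

section CatenoidSlope

variable {a d x : ℝ}

theorem div_sqrt_sinh_sq_sub_sq_lt (hd : 0 < d) (hx : d < sinh x) :
    d / √(sinh x ^ 2 - d ^ 2) < cosh x • (d / (sinh x * √(sinh x ^ 2 - d ^ 2))) := by
  have hsinh : 0 < sinh x := hd.trans hx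
  have hslope : 0 < d / √(sinh x ^ 2 - d ^ 2) :=
    div_pos hd (sqrt_pos.2 (sub_pos.2 (pow_lt_pow_left₀ hx hd.le two_ne_zero)))
  calc d / √(sinh x ^ 2 - d ^ 2)
      < cosh x / sinh x * (d / √(sinh x ^ 2 - d ^ 2)) :=
        lt_mul_of_one_lt_left hslope ((one_lt_div hsinh).2 (sinh_lt_cosh x))
    _ = cosh x • (d / (sinh x * √(sinh x ^ 2 - d ^ 2))) := by
        rw [smul_eq_mul, div_mul_div_comm, mul_div_assoc]

theorem integrableOn_Ioi_div_sqrt_sinh_sq_sub_sq (hd : 0 < d) (ha : d ≤ sinh a) :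
    IntegrableOn (fun x => d / √(sinh x ^ 2 - d ^ 2)) (Ioi a) := by
  have hmajorant := (integrableOn_Ioi_cosh_smul_comp_sinh_iff _ a).2
    (integrableOn_Ioi_div_mul_sqrt_sq_sub_sq hd.le (hd.trans_le ha) ha)
  have hmeas : Measurable fun x => d / √(sinh x ^ 2 - d ^ 2) := by fun_prop
  refine hmajorant.mono' hmeas.aestronglyMeasurable
    (ae_restrict_of_forall_mem measurableSet_Ioi fun x hx => ?_)
  rw [norm_of_nonneg (div_nonneg hd.le (sqrt_nonneg _))]
  exact (div_sqrt_sinh_sq_sub_sq_lt hd (ha.trans_lt (sinh_lt_sinh.2 hx))).le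

theorem integral_Ioi_div_sqrt_sinh_sq_sub_sq_lt_arcsin (hd : 0 < d) (ha : d ≤ sinh a) :
    ∫ x in Ioi a, d / √(sinh x ^ 2 - d ^ 2) < arcsin (d / sinh a) := by
  have hsinh : 0 < sinh a := hd.trans_le ha
  have : NeZero (volume.restrict (Ioi a)) := ⟨by simp⟩
  calc ∫ x in Ioi a, d / √(sinh x ^ 2 - d ^ 2)
      < ∫ x in Ioi a, cosh x • (d / (sinh x * √(sinh x ^ 2 - d ^ 2))) :=
        integral_lt_integral_of_ae_lt (integrableOn_Ioi_div_sqrt_sinh_sq_sub_sq hd ha)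
          ((integrableOn_Ioi_cosh_smul_comp_sinh_iff _ a).2
            (integrableOn_Ioi_div_mul_sqrt_sq_sub_sq hd.le hsinh ha))
          (ae_restrict_of_forall_mem measurableSet_Ioi fun x hx =>
            div_sqrt_sinh_sq_sub_sq_lt hd (ha.trans_lt (sinh_lt_sinh.2 hx)))
    _ = ∫ u in Ioi (sinh a), d / (u * √(u ^ 2 - d ^ 2)) :=
        integral_Ioi_cosh_smul_comp_sinh (fun u => d / (u * √(u ^ 2 - d ^ 2))) a
    _ = arcsin (d / sinh a) := integral_Ioi_div_mul_sqrt_sq_sub_sq hd.le hsinh ha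

end CatenoidSlope

theorem catenoid_half_height_lt_pi_div_two (d : ℝ) (hd : 0 < d) :
    (∫ x in Set.Ioi (Real.arsinh d), d / Real.sqrt (Real.sinh x ^ 2 - d ^ 2))
      < Real.pi / 2 := by
  calc ∫ x in Ioi (arsinh d), d / √(sinh x ^ 2 - d ^ 2)
      < arcsin (d / sinh (arsinh d)) :=
        integral_Ioi_div_sqrt_sinh_sq_sub_sq_lt_arcsin hd (sinh_arsinh d).ge
    _ = π / 2 := by rw [sinh_arsinh, div_self hd.ne', arcsin_one]
end

section
/- For every real number d > 0 and every real ρ with ρ > arsinh d, the function x ↦ sinh² x / √(sinh² x − d²) is Lebesgue integrable on the half-open interval (arsinh d, ρ]. -/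
open MeasureTheory Real

/-!
Since `sinh ≤ cosh`, the integrand is dominated by `sinh x cosh x / √(sinh² x - d²)`, which is the
derivative of `√(sinh² x - d²)`. This primitive is continuous up to the endpoint `arsinh d`, and the
nonnegative derivative of a continuous function on a compact interval is integrable.
-/

theorem integrableOn_Ioc_deriv_mul_rpow_of_nonneg {f f' : ℝ → ℝ} {a b r : ℝ} (hr : -1 < r)
    (hcont : ContinuousOn f (Set.Icc a b)) (hderiv : ∀ x ∈ Set.Ioo a b, HasDerivAt f (f' x) x)
    (hpos : ∀ x ∈ Set.Ioo a b, 0 < f x) (hnonneg : ∀ x ∈ Set.Ioo a b, 0 ≤ f' x) :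
    IntegrableOn (fun x => f' x * f x ^ r) (Set.Ioc a b) := by
  have hr' : 0 < r + 1 := by linarith
  have hprimitive : ∀ x ∈ Set.Ioo a b,
      HasDerivAt (fun x => f x ^ (r + 1) / (r + 1)) (f' x * f x ^ r) x := fun x hx => by
    have hderiv_rpow := ((hderiv x hx).rpow_const (p := r + 1)
      (Or.inl (hpos x hx).ne')).div_const (r + 1)
    rwa [add_sub_cancel_right, mul_right_comm, mul_div_cancel_right₀ _ hr'.ne'] at hderiv_rpow
  exact intervalIntegral.integrableOn_deriv_of_nonneg
    ((hcont.rpow_const fun _ _ => Or.inr hr'.le).div_const (r + 1)) hprimitive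
    fun x hx => mul_nonneg (hnonneg x hx) (rpow_nonneg (hpos x hx).le r)

theorem integrableOn_Ioc_deriv_div_sqrt_of_nonneg {f f' : ℝ → ℝ} {a b : ℝ}
    (hcont : ContinuousOn f (Set.Icc a b)) (hderiv : ∀ x ∈ Set.Ioo a b, HasDerivAt f (f' x) x)
    (hpos : ∀ x ∈ Set.Ioo a b, 0 < f x) (hnonneg : ∀ x ∈ Set.Ioo a b, 0 ≤ f' x) :
    IntegrableOn (fun x => f' x / √(f x)) (Set.Ioc a b) := by
  have hrpow := integrableOn_Ioc_deriv_mul_rpow_of_nonneg (r := -(1 / 2)) (by norm_num)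
    hcont hderiv hpos hnonneg
  rw [integrableOn_Ioc_iff_integrableOn_Ioo] at hrpow ⊢
  refine hrpow.congr_fun (fun x hx => ?_) measurableSet_Ioo
  simp only [sqrt_eq_rpow, rpow_neg (hpos x hx).le, div_eq_mul_inv]

theorem lt_sinh_of_arsinh_lt {d x : ℝ} (h : arsinh d < x) : d < sinh x := by
  simpa only [sinh_arsinh] using sinh_lt_sinh.2 h

theorem integrableOn_Ioc_sinh_mul_cosh_div_sqrt {d : ℝ} (hd : 0 ≤ d) (ρ : ℝ) :
    IntegrableOn (fun x => sinh x * cosh x / √(sinh x ^ 2 - d ^ 2)) (Set.Ioc (arsinh d) ρ) := by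
  have hderiv (x : ℝ) :
      HasDerivAt (fun x => sinh x ^ 2 - d ^ 2) (2 * (sinh x * cosh x)) x := by
    simpa only [Nat.cast_ofNat, pow_one, mul_assoc, Nat.add_one_sub_one] using
      ((hasDerivAt_sinh x).fun_pow 2).sub_const (d ^ 2)
  have hlt (x : ℝ) (hx : x ∈ Set.Ioo (arsinh d) ρ) : d < sinh x := lt_sinh_of_arsinh_lt hx.1
  have htwo : IntegrableOn (fun x => 2 * (sinh x * cosh x) / √(sinh x ^ 2 - d ^ 2))
      (Set.Ioc (arsinh d) ρ) :=
    integrableOn_Ioc_deriv_div_sqrt_of_nonneg (by fun_prop) (fun x _ => hderiv x)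
      (fun x hx => sub_pos.2 (pow_lt_pow_left₀ (hlt x hx) hd two_ne_zero))
      (fun x hx => mul_nonneg zero_le_two
        (mul_nonneg (hd.trans (hlt x hx).le) (cosh_pos x).le))
  refine IntegrableOn.congr_fun (htwo.div_const 2) (fun x _ => ?_) measurableSet_Ioc
  ring

theorem catenoid_area_integrand_integrableOn_Ioc
    (d ρ : ℝ) (hd : 0 < d) (hρ : Real.arsinh d < ρ) :
    MeasureTheory.IntegrableOn
      (fun x => Real.sinh x ^ 2 / Real.sqrt (Real.sinh x ^ 2 - d ^ 2))
      (Set.Ioc (Real.arsinh d) ρ) := by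
  refine (integrableOn_Ioc_sinh_mul_cosh_div_sqrt hd.le ρ).mono'
    (Measurable.aestronglyMeasurable (by fun_prop)) ?_
  filter_upwards [ae_restrict_mem measurableSet_Ioc] with x hx
  have hsinh : 0 ≤ sinh x := (hd.trans (lt_sinh_of_arsinh_lt hx.1)).le
  calc ‖sinh x ^ 2 / √(sinh x ^ 2 - d ^ 2)‖
      = sinh x * sinh x / √(sinh x ^ 2 - d ^ 2) := by
        rw [norm_of_nonneg (by positivity), pow_two (sinh x)]
    _ ≤ sinh x * cosh x / √(sinh x ^ 2 - d ^ 2) := by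
        gcongr
        exact (sinh_lt_cosh x).le
end

section
/- For every real number d > 0, one has ∫_{(arsinh d, arsinh(d+1)]} sinh² x / √(sinh² x − d²) dx ≤ (d+1) · log( ( √(1 + (d+1)²) + √(2d+1) ) / √(1 + d²) ). -/
open MeasureTheory Real

/-!
The catenoid's area density `sinh² x / √(sinh² x - sinh² a)` is `sinh x` times the derivative of
`arcosh (cosh x / cosh a)`, because `sinh² x - sinh² a = cosh² x - cosh² a`. Bounding the factor
`sinh x` by its value at the right endpoint leaves an integral that is an explicit `arcosh`. The
singularity at `x = a` is integrable because the primitive is continuous up to `a` and its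
derivative is nonnegative.
-/

theorem sqrt_div_sq_sub_one {c : ℝ} (hc : 0 < c) (u : ℝ) :
    √((u / c) ^ 2 - 1) = √(u ^ 2 - c ^ 2) / c := by
  rw [div_pow, div_sub_one (pow_ne_zero 2 hc.ne'), sqrt_div' _ (sq_nonneg c), sqrt_sq hc.le]

theorem arcosh_div {c : ℝ} (hc : 0 < c) (u : ℝ) :
    arcosh (u / c) = log ((u + √(u ^ 2 - c ^ 2)) / c) := by
  rw [arcosh, sqrt_div_sq_sub_one hc, add_div]

theorem hasDerivAt_arcosh_div {c u : ℝ} (hc : 0 < c) (hcu : c < u) :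
    HasDerivAt (fun v => arcosh (v / c)) (√(u ^ 2 - c ^ 2))⁻¹ u := by
  have one_lt : 1 < u / c := (one_lt_div hc).2 hcu
  refine ((hasDerivAt_arcosh one_lt).comp u ((hasDerivAt_id u).div_const c)).congr_deriv ?_
  rw [sqrt_div_sq_sub_one hc]
  field_simp

theorem cosh_sq_sub_cosh_sq (x y : ℝ) : cosh x ^ 2 - cosh y ^ 2 = sinh x ^ 2 - sinh y ^ 2 := by
  rw [cosh_sq, cosh_sq, add_sub_add_right_eq_sub]

theorem hasDerivAt_arcosh_cosh_div_cosh {a x : ℝ} (h : |a| < |x|) :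
    HasDerivAt (fun y => arcosh (cosh y / cosh a)) (sinh x / √(sinh x ^ 2 - sinh a ^ 2)) x := by
  refine ((hasDerivAt_arcosh_div (cosh_pos a) (cosh_lt_cosh.2 h)).comp x
    (hasDerivAt_cosh x)).congr_deriv ?_
  rw [cosh_sq_sub_cosh_sq, inv_mul_eq_div]

section

variable {a b : ℝ}

theorem continuousOn_Icc_arcosh_cosh_div_cosh (ha : 0 ≤ a) :
    ContinuousOn (fun x => arcosh (cosh x / cosh a)) (Set.Icc a b) :=
  continuousOn_arcosh.comp (by fun_prop) fun _ hx =>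
    (one_le_div (cosh_pos a)).2 (cosh_le_cosh.2 (abs_le_abs_of_nonneg ha hx.1))

theorem intervalIntegrable_sinh_div_sqrt (ha : 0 ≤ a) (hab : a ≤ b) :
    IntervalIntegrable (fun x => sinh x / √(sinh x ^ 2 - sinh a ^ 2)) volume a b :=
  (intervalIntegrable_iff_integrableOn_Ioc_of_le hab).2 <|
    intervalIntegral.integrableOn_deriv_of_nonneg (continuousOn_Icc_arcosh_cosh_div_cosh ha)
      (fun _ hx => hasDerivAt_arcosh_cosh_div_cosh
        ((abs_of_nonneg ha).trans_lt (lt_abs.2 (.inl hx.1))))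
      fun _ hx => div_nonneg (sinh_nonneg_iff.2 (ha.trans hx.1.le)) (sqrt_nonneg _)

theorem integral_sinh_div_sqrt (ha : 0 ≤ a) (hab : a ≤ b) :
    ∫ x in a..b, sinh x / √(sinh x ^ 2 - sinh a ^ 2) = arcosh (cosh b / cosh a) := by
  rw [intervalIntegral.integral_eq_sub_of_hasDerivAt_of_le hab
    (continuousOn_Icc_arcosh_cosh_div_cosh ha)
    (fun _ hx => hasDerivAt_arcosh_cosh_div_cosh
      ((abs_of_nonneg ha).trans_lt (lt_abs.2 (.inl hx.1))))
    (intervalIntegrable_sinh_div_sqrt ha hab),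
    div_self (cosh_pos a).ne', arcosh_zero, sub_zero]

theorem integral_sinh_sq_div_sqrt_le (ha : 0 ≤ a) (hab : a ≤ b) :
    ∫ x in a..b, sinh x ^ 2 / √(sinh x ^ 2 - sinh a ^ 2) ≤
      sinh b * arcosh (cosh b / cosh a) := by
  have integrable := intervalIntegrable_sinh_div_sqrt ha hab
  calc ∫ x in a..b, sinh x ^ 2 / √(sinh x ^ 2 - sinh a ^ 2)
      = ∫ x in a..b, sinh x * (sinh x / √(sinh x ^ 2 - sinh a ^ 2)) := by
        simp only [sq (sinh _), mul_div_assoc]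
    _ ≤ ∫ x in a..b, sinh b * (sinh x / √(sinh x ^ 2 - sinh a ^ 2)) := by
        refine intervalIntegral.integral_mono_on hab
          (integrable.continuousOn_mul continuous_sinh.continuousOn)
          (integrable.const_mul _) fun x hx => ?_
        have sinh_nonneg : 0 ≤ sinh x := sinh_nonneg_iff.2 (ha.trans hx.1)
        exact mul_le_mul_of_nonneg_right (sinh_le_sinh.2 hx.2) (by positivity)
    _ = sinh b * arcosh (cosh b / cosh a) := by
        rw [intervalIntegral.integral_const_mul, integral_sinh_div_sqrt ha hab]

end

theorem catenoid_area_first_piece_bound (d : ℝ) (hd : 0 < d) :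
    (∫ x in Set.Ioc (Real.arsinh d) (Real.arsinh (d + 1)),
        Real.sinh x ^ 2 / Real.sqrt (Real.sinh x ^ 2 - d ^ 2))
      ≤ (d + 1) *
        Real.log ((Real.sqrt (1 + (d + 1) ^ 2) + Real.sqrt (2 * d + 1))
          / Real.sqrt (1 + d ^ 2)) := by
  have arsinh_le : arsinh d ≤ arsinh (d + 1) := arsinh_le_arsinh.2 (by linarith)
  have bound := integral_sinh_sq_div_sqrt_le (arsinh_nonneg_iff.2 hd.le) arsinh_le
  have sq_sub_sq : (d + 1) ^ 2 - d ^ 2 = 2 * d + 1 := by ring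
  rwa [intervalIntegral.integral_of_le arsinh_le, arcosh_div (cosh_pos _), cosh_sq_sub_cosh_sq,
    sinh_arsinh, sinh_arsinh, cosh_arsinh, cosh_arsinh, sq_sub_sq] at bound
end

section
/- The ratio of (d+1) · log( ( √(1 + (d+1)²) + √(2d+1) ) / √(1 + d²) ) to √(2d) tends to 1 as d → ∞; that is, the quantity (d+1) · log( ( √(1 + (d+1)²) + √(2d+1) ) / √(1 + d²) ) is asymptotic to √(2d). -/
open Filter Real

open Asymptotics Topology

/-!
Since `1 + (d + 1)² = (1 + d²) + (2d + 1)`, the logarithm is `arsinh (y / x)` for the right triangle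
with legs `x = √(1 + d²)` and `y = √(2d + 1)`. As `y / x → 0` and `arsinh t ~ t` at `0`, the whole
expression is equivalent to `(d + 1) * (y / x)`, hence to `d * (√(2d) / d)`.
-/

lemma arsinh_div_eq_log {x : ℝ} (hx : 0 < x) (y : ℝ) :
    arsinh (y / x) = log ((√(x ^ 2 + y ^ 2) + y) / x) := by
  have hyp : √(1 + (y / x) ^ 2) = √(x ^ 2 + y ^ 2) / x := by
    rw [div_pow, one_add_div (pow_ne_zero 2 hx.ne'), sqrt_div' _ (sq_nonneg x), sqrt_sq hx.le]
  rw [arsinh, hyp, ← add_div, add_comm]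

lemma isEquivalent_arsinh : arsinh ~[𝓝 0] id := by
  simpa using! (hasDerivAt_arsinh 0).isLittleO

section

variable {α : Type*} {l : Filter α} {u v : α → ℝ}

lemma isEquivalent_log_hypotenuse_add_leg_div_leg (hu : ∀ᶠ t in l, 0 < u t) (hvu : v =o[l] u) :
    (fun t => log ((√(u t ^ 2 + v t ^ 2) + v t) / u t)) ~[l] fun t => v t / u t :=
  calc
    _ =ᶠ[l] fun t => arsinh (v t / u t) := hu.mono fun t ht => (arsinh_div_eq_log ht (v t)).symm
    _ ~[l] fun t => v t / u t := isEquivalent_arsinh.comp_tendsto hvu.tendsto_div_nhds_zero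

lemma sqrt_isEquivalent_sqrt (huv : u ~[l] v) : (fun t => √(u t)) ~[l] fun t => √(v t) := by
  obtain ⟨φ, hφ, hu⟩ := huv.exists_eq_mul
  refine isEquivalent_iff_exists_eq_mul.2 ⟨fun t => √(φ t), by simpa using hφ.sqrt, ?_⟩
  filter_upwards [hφ.eventually_const_le one_pos, hu] with t hφt hut
  rw [hut, Pi.mul_apply, Pi.mul_apply, sqrt_mul hφt]

end

lemma isEquivalent_sqrt_const_mul_add_const {a : ℝ} (ha : 0 < a) (b : ℝ) :
    (fun d : ℝ => √(a * d + b)) ~[atTop] fun d => √(a * d) :=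
  sqrt_isEquivalent_sqrt <| IsEquivalent.refl.add_const_of_norm_tendsto_atTop <|
    tendsto_norm_atTop_atTop.comp <| tendsto_id.const_mul_atTop ha

lemma isEquivalent_sqrt_const_add_sq (c : ℝ) : (fun d : ℝ => √(c + d ^ 2)) ~[atTop] id :=
  calc
    _ ~[atTop] fun d : ℝ => √(d ^ 2) :=
      sqrt_isEquivalent_sqrt <| IsEquivalent.refl.const_add_of_norm_tendsto_atTop <|
        tendsto_norm_atTop_atTop.comp <| tendsto_pow_atTop two_ne_zero
    _ =ᶠ[atTop] id := (eventually_ge_atTop 0).mono fun _ => sqrt_sq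

lemma isLittleO_sqrt_const_mul_id (c : ℝ) : (fun d : ℝ => √(c * d)) =o[atTop] id := by
  have hsq : (fun d : ℝ => c * d) =o[atTop] fun d => d ^ 2 := by
    simpa only [pow_one] using
      (isLittleO_pow_pow_atTop_of_lt (𝕜 := ℝ) one_lt_two).const_mul_left c
  calc
    _ =o[atTop] fun d : ℝ => √(d ^ 2) := hsq.sqrt (.of_forall sq_nonneg)
    _ =ᶠ[atTop] id := (eventually_ge_atTop 0).mono fun _ => sqrt_sq

lemma isEquivalent_log_sqrt_add_sqrt_div_sqrt :
    (fun d : ℝ => log ((√(1 + (d + 1) ^ 2) + √(2 * d + 1)) / √(1 + d ^ 2))) ~[atTop]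
      fun d => √(2 * d) / d := by
  have hleg : (fun d : ℝ => √(2 * d + 1)) =o[atTop] fun d => √(1 + d ^ 2) :=
    (isEquivalent_sqrt_const_mul_add_const two_pos 1).trans_isLittleO <|
      (isLittleO_sqrt_const_mul_id 2).trans_isEquivalent (isEquivalent_sqrt_const_add_sq 1).symm
  have hpos : ∀ᶠ d : ℝ in atTop, 0 < √(1 + d ^ 2) := .of_forall fun d => by positivity
  calc
    _ =ᶠ[atTop] fun d : ℝ =>
        log ((√(√(1 + d ^ 2) ^ 2 + √(2 * d + 1) ^ 2) + √(2 * d + 1)) / √(1 + d ^ 2)) := by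
      filter_upwards [eventually_ge_atTop 0] with d hd
      have hsum : 1 + (d + 1) ^ 2 = (1 + d ^ 2) + (2 * d + 1) := by ring
      rw [sq_sqrt (by positivity), sq_sqrt (by positivity), hsum]
    _ ~[atTop] fun d => √(2 * d + 1) / √(1 + d ^ 2) :=
      isEquivalent_log_hypotenuse_add_leg_div_leg hpos hleg
    _ ~[atTop] fun d => √(2 * d) / d :=
      (isEquivalent_sqrt_const_mul_add_const two_pos 1).div (isEquivalent_sqrt_const_add_sq 1)

theorem first_piece_bound_asymptotic_sqrt_two_d :
    Filter.Tendsto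
      (fun d : ℝ =>
        ((d + 1) *
          Real.log ((Real.sqrt (1 + (d + 1) ^ 2) + Real.sqrt (2 * d + 1))
            / Real.sqrt (1 + d ^ 2))) / Real.sqrt (2 * d))
      Filter.atTop (nhds 1) := by
  have hfactor : (fun d : ℝ => d + 1) ~[atTop] id :=
    IsEquivalent.refl.add_const_of_norm_tendsto_atTop tendsto_norm_atTop_atTop
  have hne : ∀ᶠ d : ℝ in atTop, √(2 * d) ≠ 0 :=
    (eventually_gt_atTop 0).mono fun d hd => by positivity
  refine (isEquivalent_iff_tendsto_one hne).1 ?_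
  calc
    _ ~[atTop] fun d : ℝ => d * (√(2 * d) / d) :=
      hfactor.mul isEquivalent_log_sqrt_add_sqrt_div_sqrt
    _ =ᶠ[atTop] fun d => √(2 * d) :=
      (eventually_ne_atTop 0).mono fun d hd => mul_div_cancel₀ _ hd
end

section
/- For every real number d > 0 and every real ρ with ρ ≥ arsinh(d+1), one has ∫_{arsinh(d+1)}^{ρ} sinh² x / √(sinh² x − d²) dx ≤ (1/2)·( √( e^{2ρ} − (2 + 4d²) ) − √(8d + 2) ). -/
open MeasureTheory Real

/-!
The identity `4 sinh² x = e^{2x} - 2 + e^{-2x}` gives everything. Dropping `e^{-2x}` in the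
denominator and using `4 sinh² x ≤ e^{2x}` in the numerator bounds the integrand by the derivative
of `√(e^{2x} - (2 + 4d²)) / 2`. At the left endpoint, where `sinh x = d + 1`, the bound
`e^{-2x} ≤ 1` yields `e^{2x} ≥ 4(d + 1)² + 1 = (2 + 4d²) + (8d + 3)`.
-/

lemma four_mul_sinh_sq (x : ℝ) : 4 * sinh x ^ 2 = exp (2 * x) - 2 + exp (-(2 * x)) := by
  linarith [cosh_two_mul x, cosh_sq x, cosh_eq (2 * x)]

lemma exp_two_mul_sub_two_lt_four_mul_sinh_sq (x : ℝ) : exp (2 * x) - 2 < 4 * sinh x ^ 2 := by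
  linarith [four_mul_sinh_sq x, exp_pos (-(2 * x))]

lemma four_mul_sinh_sq_add_one_le_exp_two_mul {x : ℝ} (hx : 0 ≤ x) :
    4 * sinh x ^ 2 + 1 ≤ exp (2 * x) := by
  have hexp : exp (-(2 * x)) ≤ 1 := exp_le_one_iff.2 (by linarith)
  linarith [four_mul_sinh_sq x]

lemma hasDerivAt_sqrt_exp_two_mul_sub_div_two {c x : ℝ} (hc : c < exp (2 * x)) :
    HasDerivAt (fun y ↦ √(exp (2 * y) - c) / 2) (exp (2 * x) / (2 * √(exp (2 * x) - c))) x := by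
  have hexp : HasDerivAt (fun y ↦ exp (2 * y) - c) (exp (2 * x) * (2 * 1)) x :=
    ((hasDerivAt_id x).const_mul 2).exp.sub_const c
  exact ((hexp.sqrt (sub_pos.2 hc).ne').div_const 2).congr_deriv (by ring)

lemma sinh_sq_div_sqrt_sinh_sq_sub_le {c x : ℝ} (hx : 0 ≤ x) (hc : 2 + 4 * c < exp (2 * x)) :
    sinh x ^ 2 / √(sinh x ^ 2 - c) ≤ exp (2 * x) / (2 * √(exp (2 * x) - (2 + 4 * c))) := by
  have hpos : 0 < exp (2 * x) - (2 + 4 * c) := sub_pos.2 hc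
  have hnum : sinh x ^ 2 ≤ exp (2 * x) / 4 := by
    linarith [four_mul_sinh_sq_add_one_le_exp_two_mul hx]
  have hden : √(exp (2 * x) - (2 + 4 * c)) / 2 ≤ √(sinh x ^ 2 - c) := by
    apply le_sqrt_of_sq_le
    rw [div_pow, sq_sqrt hpos.le]
    linarith [exp_two_mul_sub_two_lt_four_mul_sinh_sq x]
  calc sinh x ^ 2 / √(sinh x ^ 2 - c)
      ≤ (exp (2 * x) / 4) / (√(exp (2 * x) - (2 + 4 * c)) / 2) :=
        div_le_div₀ (by positivity) hnum (half_pos (sqrt_pos.2 hpos)) hden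
    _ = exp (2 * x) / (2 * √(exp (2 * x) - (2 + 4 * c))) := by ring

lemma continuousOn_sinh_sq_div_sqrt_sinh_sq_sub {c : ℝ} {s : Set ℝ}
    (hc : ∀ x ∈ s, c < sinh x ^ 2) :
    ContinuousOn (fun x ↦ sinh x ^ 2 / √(sinh x ^ 2 - c)) s :=
  ContinuousOn.div (by fun_prop) (by fun_prop) fun x hx ↦ (sqrt_pos.2 (sub_pos.2 (hc x hx))).ne'

lemma integral_sinh_sq_div_sqrt_sinh_sq_sub_le {a b c : ℝ} (ha : 0 ≤ a) (hab : a ≤ b)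
    (hc : 2 + 4 * c ≤ exp (2 * a)) :
    ∫ x in a..b, sinh x ^ 2 / √(sinh x ^ 2 - c) ≤
      √(exp (2 * b) - (2 + 4 * c)) / 2 - √(exp (2 * a) - (2 + 4 * c)) / 2 := by
  have hlt : ∀ x ∈ Set.Ioo a b, 2 + 4 * c < exp (2 * x) := fun x hx ↦
    hc.trans_lt (exp_lt_exp.2 (by linarith [hx.1]))
  have hsinh : ∀ x ∈ Set.Icc a b, c < sinh x ^ 2 := fun x hx ↦ by
    have hexp : exp (2 * a) ≤ exp (2 * x) := exp_le_exp.2 (by linarith [hx.1])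
    linarith [exp_two_mul_sub_two_lt_four_mul_sinh_sq x]
  exact intervalIntegral.integral_le_sub_of_hasDeriv_right_of_le
    (g := fun y ↦ √(exp (2 * y) - (2 + 4 * c)) / 2) hab (by fun_prop)
    (fun x hx ↦ (hasDerivAt_sqrt_exp_two_mul_sub_div_two (hlt x hx)).hasDerivWithinAt)
    (continuousOn_sinh_sq_div_sqrt_sinh_sq_sub hsinh).integrableOn_Icc
    (fun x hx ↦ sinh_sq_div_sqrt_sinh_sq_sub_le (ha.trans hx.1.le) (hlt x hx))

theorem catenoid_area_second_piece_bound
    (d ρ : ℝ) (hd : 0 < d) (hρ : Real.arsinh (d + 1) ≤ ρ) :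
    (∫ x in Set.Icc (Real.arsinh (d + 1)) ρ,
        Real.sinh x ^ 2 / Real.sqrt (Real.sinh x ^ 2 - d ^ 2))
      ≤ (1 / 2) *
        (Real.sqrt (Real.exp (2 * ρ) - (2 + 4 * d ^ 2))
          - Real.sqrt (8 * d + 2)) := by
  have hstart : 0 ≤ arsinh (d + 1) := arsinh_nonneg_iff.2 (by linarith)
  have hexp : 8 * d + 2 ≤ exp (2 * arsinh (d + 1)) - (2 + 4 * d ^ 2) := by
    have hsinh := four_mul_sinh_sq_add_one_le_exp_two_mul hstart
    rw [sinh_arsinh] at hsinh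
    linarith
  rw [integral_Icc_eq_integral_Ioc, ← intervalIntegral.integral_of_le hρ]
  calc ∫ x in arsinh (d + 1)..ρ, sinh x ^ 2 / √(sinh x ^ 2 - d ^ 2)
      ≤ √(exp (2 * ρ) - (2 + 4 * d ^ 2)) / 2
          - √(exp (2 * arsinh (d + 1)) - (2 + 4 * d ^ 2)) / 2 :=
        integral_sinh_sq_div_sqrt_sinh_sq_sub_le hstart hρ (by linarith)
    _ ≤ 1 / 2 * (√(exp (2 * ρ) - (2 + 4 * d ^ 2)) - √(8 * d + 2)) := by
        linarith [sqrt_le_sqrt hexp]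
end

section
/- There exists d₀ > 0 such that for all real d ≥ d₀: (d+1) · log( ( √(1 + (d+1)²) + √(2d+1) ) / √(1 + d²) ) + (1/2)·( √( d³ − (2 + 4d²) ) − √(8d + 2) ) < cosh( (3/2)·log d ) − 1. -/
open Real

/-!
Put `a = √(1 + d ^ 2)` and `b = √(2 * d + 1)`. Then `a ^ 2 + b ^ 2 = 1 + (d + 1) ^ 2`, so the
logarithm is `arsinh (b / a) ≤ b / a`, and the first summand is at most `√(2 * d) + 1`. The square
roots in the second summand give at most `(d - 2) * √d / 2 - √(2 * d)`. The two `√(2 * d)` cancel,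
leaving `d * √d / 2 - √d + 1`, which is at most `d * √d / 2 - 1 < cosh (3 / 2 * log d) - 1` as soon
as `√d ≥ 2`.
-/

lemma arsinh_le_self {x : ℝ} (hx : 0 ≤ x) : arsinh x ≤ x := by
  simpa only [sinh_arsinh] using self_le_sinh_iff.2 (arsinh_nonneg_iff.2 hx)

lemma log_sqrt_sq_add_sq_add_div {a : ℝ} (ha : 0 < a) (b : ℝ) :
    log ((√(a ^ 2 + b ^ 2) + b) / a) = arsinh (b / a) := by
  have hsqrt : √(1 + (b / a) ^ 2) = √(a ^ 2 + b ^ 2) / a := by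
    rw [← sqrt_sq ha.le, ← sqrt_div' _ (sq_nonneg a), sqrt_sq ha.le]
    congr 1
    field_simp
  rw [arsinh, hsqrt, add_comm, add_div]

lemma log_sqrt_add_sqrt_div_sqrt_le {d : ℝ} (hd : 0 ≤ 2 * d + 1) :
    log ((√(1 + (d + 1) ^ 2) + √(2 * d + 1)) / √(1 + d ^ 2)) ≤ √(2 * d + 1) / √(1 + d ^ 2) := by
  have hsum : 1 + (d + 1) ^ 2 = √(1 + d ^ 2) ^ 2 + √(2 * d + 1) ^ 2 := by
    rw [sq_sqrt (by positivity), sq_sqrt hd]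
    ring
  rw [hsum, log_sqrt_sq_add_sq_add_div (by positivity)]
  exact arsinh_le_self (by positivity)

lemma add_one_mul_sqrt_div_sqrt_le {d : ℝ} (hd : 2 ≤ d) :
    (d + 1) * (√(2 * d + 1) / √(1 + d ^ 2)) ≤ √(2 * d) + 1 := by
  obtain ⟨r, hr, hdr⟩ : ∃ r : ℝ, 2 ≤ r ∧ 2 * d = r ^ 2 :=
    ⟨√(2 * d), le_sqrt_of_sq_le (by linarith), (sq_sqrt (by linarith)).symm⟩
  obtain rfl : d = r ^ 2 / 2 := by linarith
  -- Cleared of denominators and squared, the claim is half of this inequality.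
  have hfactor : 0 ≤ r * ((r - 2) * (r ^ 3 - 2)) := by
    have : 2 ^ 3 ≤ r ^ 3 := by gcongr
    exact mul_nonneg (by linarith) (mul_nonneg (by linarith) (by linarith))
  rw [hdr, sqrt_sq (by linarith), ← mul_div_assoc, div_le_iff₀ (by positivity)]
  refine (sq_le_sq₀ (by positivity) (by positivity)).1 ?_
  rw [mul_pow, mul_pow, sq_sqrt (by positivity), sq_sqrt (by positivity)]
  linarith

lemma sqrt_cube_sub_two_add_four_mul_sq_le {d : ℝ} (hd : 2 ≤ d) :
    √(d ^ 3 - (2 + 4 * d ^ 2)) ≤ (d - 2) * √d := by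
  refine sqrt_le_iff.2 ⟨mul_nonneg (by linarith) (sqrt_nonneg d), ?_⟩
  rw [mul_pow, sq_sqrt (by linarith)]
  linarith

lemma two_mul_sqrt_two_mul_le (d : ℝ) : 2 * √(2 * d) ≤ √(8 * d + 2) :=
  calc 2 * √(2 * d) = √(2 ^ 2 * (2 * d)) := by
        rw [sqrt_mul (sq_nonneg 2), sqrt_sq zero_le_two]
    _ ≤ √(8 * d + 2) := sqrt_le_sqrt (by linarith)

lemma rpow_div_two_lt_cosh_mul_log {x : ℝ} (hx : 0 < x) (p : ℝ) :
    x ^ p / 2 < cosh (p * log x) := by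
  rw [← log_rpow hx, cosh_log (by positivity)]
  gcongr
  exact lt_add_of_pos_right _ (by positivity)

lemma rpow_three_halves {x : ℝ} (hx : 0 ≤ x) : x ^ (3 / 2 : ℝ) = x * √x := by
  rw [sqrt_eq_rpow, ← rpow_one_add' hx (by norm_num)]
  norm_num

theorem area_bound_lt_disks_for_large_d :
    ∃ d₀ : ℝ, 0 < d₀ ∧ ∀ d : ℝ, d₀ ≤ d →
      (d + 1) *
        Real.log ((Real.sqrt (1 + (d + 1) ^ 2) + Real.sqrt (2 * d + 1))
          / Real.sqrt (1 + d ^ 2))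
      + (1 / 2) *
        (Real.sqrt (d ^ 3 - (2 + 4 * d ^ 2)) - Real.sqrt (8 * d + 2))
      < Real.cosh ((3 / 2) * Real.log d) - 1 := by
  -- From `d = 5` on, the radicand `d ^ 3 - (2 + 4 * d ^ 2)` is positive.
  refine ⟨5, by norm_num, fun d hd => ?_⟩
  have hsqrt : 2 ≤ √d := le_sqrt_of_sq_le (by linarith)
  calc _ ≤ (d + 1) * (√(2 * d + 1) / √(1 + d ^ 2))
        + 1 / 2 * ((d - 2) * √d - 2 * √(2 * d)) := by
        gcongr
        · exact log_sqrt_add_sqrt_div_sqrt_le (by linarith)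
        · exact sqrt_cube_sub_two_add_four_mul_sq_le (by linarith)
        · exact two_mul_sqrt_two_mul_le d
    _ ≤ √(2 * d) + 1 + 1 / 2 * ((d - 2) * √d - 2 * √(2 * d)) := by
        gcongr
        exact add_one_mul_sqrt_div_sqrt_le (by linarith)
    _ = d * √d / 2 - √d + 1 := by ring
    _ ≤ d ^ (3 / 2 : ℝ) / 2 - 1 := by
        rw [rpow_three_halves (by linarith)]
        linarith
    _ < cosh (3 / 2 * log d) - 1 := by
        gcongr
        exact rpow_div_two_lt_cosh_mul_log (by linarith) _
end

section
/- There exists d₀ > 0 such that for every real d ≥ d₀, one has ∫_{(arsinh d, (3/2)·log d]} sinh² x / √(sinh² x − d²) dx < cosh( (3/2)·log d ) − 1. -/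
open MeasureTheory Real

/-!
On the domain of integration `sinh x < cosh x`, so the area density `sinh² x / √(sinh² x - d²)` is
at most `sinh x * cosh x / √(sinh² x - d²)`, the derivative of `√(sinh² x - d²)`. The catenoid
integral up to radius `R` is therefore at most `√(sinh² R - d²)`, and squaring shows that this is
less than `cosh R - 1` exactly when `2 * (cosh R - 1) < d²`. For `R = (3/2) log d` the
quantity `2 * (cosh R - 1)` grows only like `d ^ (3/2)`.
-/

lemma hasDerivAt_sqrt_sq_sub_const {f : ℝ → ℝ} {f' x c : ℝ} (hf : HasDerivAt f f' x)
    (hc : f x ^ 2 - c ≠ 0) :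
    HasDerivAt (fun y => √(f y ^ 2 - c)) (f x * f' / √(f x ^ 2 - c)) x := by
  refine (((hf.fun_pow 2).sub_const c).sqrt hc).congr_deriv ?_
  push_cast
  rw [pow_one, mul_assoc, mul_div_mul_left _ _ two_ne_zero]

lemma sinh_sq_le_sinh_mul_cosh {x : ℝ} (hx : 0 ≤ x) : sinh x ^ 2 ≤ sinh x * cosh x := by
  rw [sq]
  exact mul_le_mul_of_nonneg_left (sinh_lt_cosh x).le (sinh_nonneg_iff.2 hx)

section Comparison

variable {a b c : ℝ}

lemma lt_sinh_sq_of_lt {x : ℝ} (ha : 0 ≤ a) (hc : c ≤ sinh a ^ 2) (hx : a < x) :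
    c < sinh x ^ 2 :=
  hc.trans_lt (pow_lt_pow_left₀ (sinh_lt_sinh.2 hx) (sinh_nonneg_iff.2 ha) two_ne_zero)

lemma hasDerivAt_sqrt_sinh_sq_sub {x : ℝ} (ha : 0 ≤ a) (hc : c ≤ sinh a ^ 2) (hx : a < x) :
    HasDerivAt (fun y => √(sinh y ^ 2 - c)) (sinh x * cosh x / √(sinh x ^ 2 - c)) x :=
  hasDerivAt_sqrt_sq_sub_const (hasDerivAt_sinh x) (sub_pos.2 (lt_sinh_sq_of_lt ha hc hx)).ne'

lemma integrableOn_sinh_mul_cosh_div_sqrt (ha : 0 ≤ a) (hc : c ≤ sinh a ^ 2) :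
    IntegrableOn (fun x => sinh x * cosh x / √(sinh x ^ 2 - c)) (Set.Ioc a b) := by
  refine intervalIntegral.integrableOn_deriv_of_nonneg (g := fun y => √(sinh y ^ 2 - c))
    (by fun_prop) (fun x hx => hasDerivAt_sqrt_sinh_sq_sub ha hc hx.1) fun x hx => ?_
  have hsinh : 0 ≤ sinh x := sinh_nonneg_iff.2 (ha.trans hx.1.le)
  positivity

lemma setIntegral_sinh_mul_cosh_div_sqrt (ha : 0 ≤ a) (hab : a ≤ b) (hc : c ≤ sinh a ^ 2) :
    ∫ x in Set.Ioc a b, sinh x * cosh x / √(sinh x ^ 2 - c) =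
      √(sinh b ^ 2 - c) - √(sinh a ^ 2 - c) := by
  rw [← intervalIntegral.integral_of_le hab]
  exact intervalIntegral.integral_eq_sub_of_hasDerivAt_of_le hab (by fun_prop)
    (fun x hx => hasDerivAt_sqrt_sinh_sq_sub ha hc hx.1)
    ((intervalIntegrable_iff_integrableOn_Ioc_of_le hab).2
      (integrableOn_sinh_mul_cosh_div_sqrt ha hc))

lemma sinh_sq_div_sqrt_le {x : ℝ} (hx : 0 ≤ x) :
    sinh x ^ 2 / √(sinh x ^ 2 - c) ≤ sinh x * cosh x / √(sinh x ^ 2 - c) :=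
  div_le_div_of_nonneg_right (sinh_sq_le_sinh_mul_cosh hx) (sqrt_nonneg _)

lemma integrableOn_sinh_sq_div_sqrt (ha : 0 ≤ a) (hc : c ≤ sinh a ^ 2) :
    IntegrableOn (fun x => sinh x ^ 2 / √(sinh x ^ 2 - c)) (Set.Ioc a b) := by
  refine (integrableOn_sinh_mul_cosh_div_sqrt ha hc).mono'
    (by fun_prop : Measurable _).aestronglyMeasurable ?_
  filter_upwards [ae_restrict_mem measurableSet_Ioc] with x hx
  rw [norm_of_nonneg (by positivity)]
  exact sinh_sq_div_sqrt_le (ha.trans hx.1.le)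

lemma setIntegral_sinh_sq_div_sqrt_le (ha : 0 ≤ a) (hab : a ≤ b) (hc : c ≤ sinh a ^ 2) :
    ∫ x in Set.Ioc a b, sinh x ^ 2 / √(sinh x ^ 2 - c) ≤
      √(sinh b ^ 2 - c) - √(sinh a ^ 2 - c) :=
  calc ∫ x in Set.Ioc a b, sinh x ^ 2 / √(sinh x ^ 2 - c)
      ≤ ∫ x in Set.Ioc a b, sinh x * cosh x / √(sinh x ^ 2 - c) :=
        setIntegral_mono_on (integrableOn_sinh_sq_div_sqrt ha hc)
          (integrableOn_sinh_mul_cosh_div_sqrt ha hc) measurableSet_Ioc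
          fun _ hx => sinh_sq_div_sqrt_le (ha.trans hx.1.le)
    _ = √(sinh b ^ 2 - c) - √(sinh a ^ 2 - c) := setIntegral_sinh_mul_cosh_div_sqrt ha hab hc

end Comparison

lemma sqrt_sinh_sq_sub_lt_cosh_sub_one_iff {R c : ℝ} (hR : R ≠ 0) :
    √(sinh R ^ 2 - c) < cosh R - 1 ↔ 2 * (cosh R - 1) < c := by
  rw [sqrt_lt' (sub_pos.2 (one_lt_cosh.2 hR)), sinh_sq]
  constructor <;> intro h <;> linarith

lemma two_mul_cosh_le_exp_add_one {x : ℝ} (hx : 0 ≤ x) : 2 * cosh x ≤ exp x + 1 := by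
  have hexp : exp (-x) ≤ 1 := exp_le_one_iff.2 (neg_nonpos.2 hx)
  rw [cosh_eq]
  linarith

lemma two_mul_cosh_mul_log_sub_one_lt {d s : ℝ} (hd : 1 ≤ d) (hs₀ : 0 ≤ s) (hs₂ : s ≤ 2) :
    2 * (cosh (s * log d) - 1) < d ^ 2 := by
  have hexp : exp (s * log d) ≤ d ^ 2 :=
    calc exp (s * log d) = d ^ s := by rw [rpow_def_of_pos (by linarith), mul_comm]
      _ ≤ d ^ (2 : ℝ) := rpow_le_rpow_of_exponent_le hd hs₂
      _ = d ^ 2 := rpow_two d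
  linarith [two_mul_cosh_le_exp_add_one (mul_nonneg hs₀ (log_nonneg hd))]

theorem catenoid_area_lt_disks_for_large_d_general {d R : ℝ} (hd : 0 ≤ d) (hR : 0 < R)
    (hdR : 2 * (cosh R - 1) < d ^ 2) :
    ∫ x in Set.Ioc (arsinh d) R, sinh x ^ 2 / √(sinh x ^ 2 - d ^ 2) < cosh R - 1 := by
  rcases le_total R (arsinh d) with hle | hle
  · simpa only [Set.Ioc_eq_empty_of_le hle, setIntegral_empty, sub_pos, one_lt_cosh] using hR.ne'
  · calc ∫ x in Set.Ioc (arsinh d) R, sinh x ^ 2 / √(sinh x ^ 2 - d ^ 2)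
        ≤ √(sinh R ^ 2 - d ^ 2) - √(sinh (arsinh d) ^ 2 - d ^ 2) :=
          setIntegral_sinh_sq_div_sqrt_le (arsinh_nonneg_iff.2 hd) hle (by rw [sinh_arsinh])
      _ = √(sinh R ^ 2 - d ^ 2) := by rw [sinh_arsinh, sub_self, sqrt_zero, sub_zero]
      _ < cosh R - 1 := (sqrt_sinh_sq_sub_lt_cosh_sub_one_iff hR.ne').2 hdR

theorem catenoid_area_lt_disks_for_large_d :
    ∃ d₀ : ℝ, 0 < d₀ ∧ ∀ d : ℝ, d₀ ≤ d →
      (∫ x in Set.Ioc (Real.arsinh d) ((3 / 2) * Real.log d),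
          Real.sinh x ^ 2 / Real.sqrt (Real.sinh x ^ 2 - d ^ 2))
        < Real.cosh ((3 / 2) * Real.log d) - 1 := by
  exact ⟨2, two_pos, fun d hd => catenoid_area_lt_disks_for_large_d_general (by linarith)
    (mul_pos (by norm_num) (log_pos (by linarith)))
    (two_mul_cosh_mul_log_sub_one_lt (by linarith) (by norm_num) (by norm_num))⟩
end

section
/- The quantity ĥ(d) = ∫_{(arsinh d, (3/2)·log d]} d / √(sinh² x − d²) dx tends to π/2 as d → ∞. -/
open MeasureTheory Filter Real

/-!
The generating curve of the catenoid with parameter `d` has slope `d / √(sinh² x - d²)`. Dividing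
this slope by `tanh x` makes it exact: the quotient is the derivative of `arccos (d / sinh x)`.
Between the neck `arsinh d` and infinity, `tanh` takes values between `tanh (arsinh d)` and `1`,
so the height reached at radius `ρ` lies between `tanh (arsinh d) * arccos (d / sinh ρ)` and
`arccos (d / sinh ρ)`. Since `tanh (arsinh d) → 1` as `d → ∞`, the height has the same limit as
`arccos (d / sinh ρ)`. For `ρ = p log d` with `p > 1`, `sinh ρ` grows like `d ^ p / 2` and this
limit is `arccos 0 = π / 2`.
-/

open Set Topology

theorem arsinh_le_iff_le_sinh {x y : ℝ} : arsinh x ≤ y ↔ x ≤ sinh y :=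
  sinhOrderIso.symm_apply_le

theorem arsinh_lt_iff_lt_sinh {x y : ℝ} : arsinh x < y ↔ x < sinh y :=
  sinhOrderIso.symm_apply_lt

theorem tanh_arsinh_eq_sin_arctan (x : ℝ) : tanh (arsinh x) = sin (arctan x) := by
  rw [tanh_arsinh, sin_arctan]

theorem tanh_strictMono : StrictMono tanh := by
  have htanh : tanh = fun x => sin (arctan (sinh x)) := by
    funext x
    rw [← tanh_arsinh_eq_sin_arctan, arsinh_sinh]
  rw [htanh]
  exact sin_arctan_strictMono.comp sinh_strictMono

theorem tanh_pos_of_pos {x : ℝ} (hx : 0 < x) : 0 < tanh x :=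
  tanh_zero ▸ tanh_strictMono hx

theorem tendsto_tanh_arsinh_atTop : Tendsto (fun x => tanh (arsinh x)) atTop (𝓝 1) := by
  simp_rw [tanh_arsinh_eq_sin_arctan]
  rw [← sin_pi_div_two]
  exact (continuous_sin.tendsto _).comp (tendsto_arctan_atTop.mono_right nhdsWithin_le_nhds)

theorem sinh_mul_log {x : ℝ} (hx : 0 < x) (p : ℝ) :
    sinh (p * log x) = (x ^ p - x ^ (-p)) / 2 := by
  rw [← log_rpow hx, sinh_log (rpow_pos_of_pos hx p), rpow_neg hx.le]

theorem tendsto_sinh_mul_log_div_atTop {p : ℝ} (hp : 1 < p) :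
    Tendsto (fun x => sinh (p * log x) / x) atTop atTop := by
  have hgrow : Tendsto (fun x : ℝ => x ^ (p - 1)) atTop atTop := tendsto_rpow_atTop (by linarith)
  have hdecay : Tendsto (fun x : ℝ => x ^ (-(p + 1))) atTop (𝓝 0) :=
    tendsto_rpow_neg_atTop (by linarith)
  refine ((hgrow.atTop_add hdecay.neg).atTop_div_const two_pos).congr' ?_
  filter_upwards [eventually_gt_atTop 0] with x hx
  rw [sinh_mul_log hx, neg_add', rpow_sub_one hx.ne', rpow_sub_one hx.ne']
  ring

theorem eventually_arsinh_le_mul_log {p : ℝ} (hp : 1 < p) :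
    ∀ᶠ d in atTop, arsinh d ≤ p * log d := by
  filter_upwards [eventually_gt_atTop 0,
    (tendsto_sinh_mul_log_div_atTop hp).eventually_ge_atTop 1] with d hd hratio
  exact arsinh_le_iff_le_sinh.2 ((one_le_div hd).1 hratio)

theorem tendsto_div_sinh_mul_log {p : ℝ} (hp : 1 < p) :
    Tendsto (fun d => d / sinh (p * log d)) atTop (𝓝 0) := by
  simpa only [Pi.inv_def, inv_div] using (tendsto_sinh_mul_log_div_atTop hp).inv_tendsto_atTop

/-- The slope at radius `x` of the generating curve of the rotationally invariant catenoid `C_d`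
in `ℍ² × ℝ`. The real-valued formula is meaningful only beyond the neck, `arsinh d < x`, since
`√` vanishes on negative numbers. -/
noncomputable def catenoidSlope (d x : ℝ) : ℝ :=
  d / √(sinh x ^ 2 - d ^ 2)

/-- The height `λ_d(ρ)` at radius `ρ` of the generating curve of the catenoid `C_d`, measured
from its neck at radius `arsinh d`. -/
noncomputable def catenoidHeight (d ρ : ℝ) : ℝ :=
  ∫ x in Ioc (arsinh d) ρ, catenoidSlope d x

section Catenoid

variable {d x ρ : ℝ}

theorem catenoidSlope_nonneg (hd : 0 ≤ d) : 0 ≤ catenoidSlope d x :=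
  div_nonneg hd (sqrt_nonneg _)

theorem catenoidSlope_le_div_tanh (hd : 0 ≤ d) (hx : 0 < x) :
    catenoidSlope d x ≤ catenoidSlope d x / tanh x :=
  le_div_self (catenoidSlope_nonneg hd) (tanh_pos_of_pos hx) (tanh_lt_one x).le

theorem tanh_arsinh_mul_div_tanh_le_catenoidSlope (hd : 0 < d) (hx : arsinh d ≤ x) :
    tanh (arsinh d) * (catenoidSlope d x / tanh x) ≤ catenoidSlope d x := by
  have htanh : 0 < tanh x := tanh_pos_of_pos ((arsinh_pos_iff.2 hd).trans_le hx)
  rw [← mul_div_assoc, div_le_iff₀ htanh, mul_comm]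
  exact mul_le_mul_of_nonneg_left (tanh_strictMono.monotone hx) (catenoidSlope_nonneg hd.le)

theorem hasDerivAt_arccos_const_div_s11 {s : ℝ} (hd : 0 < d) (hs : d < s) :
    HasDerivAt (fun t => arccos (d / t)) (d / √(s ^ 2 - d ^ 2) / s) s := by
  have hs0 : 0 < s := hd.trans hs
  have hgt : -1 < d / s := neg_one_lt_zero.trans (div_pos hd hs0)
  have hlt : d / s < 1 := (div_lt_one hs0).2 hs
  have hquot : HasDerivAt (fun t => d / t) (-d / s ^ 2) s := by
    simpa using (hasDerivAt_const s d).fun_div (hasDerivAt_id s) hs0.ne'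
  have hsqrt : √(1 - (d / s) ^ 2) = √(s ^ 2 - d ^ 2) / s := by
    rw [show 1 - (d / s) ^ 2 = (s ^ 2 - d ^ 2) / s ^ 2 by field_simp,
      sqrt_div' _ (sq_nonneg s), sqrt_sq hs0.le]
  refine ((hasDerivAt_arccos hgt.ne' hlt.ne).comp s hquot).congr_deriv ?_
  rw [hsqrt]
  field_simp

theorem hasDerivAt_arccos_const_div_sinh (hd : 0 < d) (hx : arsinh d < x) :
    HasDerivAt (fun y => arccos (d / sinh y)) (catenoidSlope d x / tanh x) x := by
  have hs : d < sinh x := arsinh_lt_iff_lt_sinh.1 hx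
  refine ((hasDerivAt_arccos_const_div_s11 hd hs).comp x (hasDerivAt_sinh x)).congr_deriv ?_
  rw [catenoidSlope, tanh_eq_sinh_div_cosh, div_div_eq_mul_div, div_mul_eq_mul_div]

theorem continuousOn_arccos_const_div_sinh (hd : 0 < d) :
    ContinuousOn (fun y => arccos (d / sinh y)) (Ici (arsinh d)) :=
  continuous_arccos.comp_continuousOn <| continuousOn_const.div continuous_sinh.continuousOn
    fun _ hy => (hd.trans_le (arsinh_le_iff_le_sinh.1 hy)).ne'

theorem integrableOn_catenoidSlope_div_tanh (hd : 0 < d) :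
    IntegrableOn (fun x => catenoidSlope d x / tanh x) (Ioc (arsinh d) ρ) := by
  refine intervalIntegral.integrableOn_deriv_of_nonneg
    ((continuousOn_arccos_const_div_sinh hd).mono Icc_subset_Ici_self)
    (fun x hx => hasDerivAt_arccos_const_div_sinh hd hx.1) fun x hx => ?_
  exact div_nonneg (catenoidSlope_nonneg hd.le)
    (tanh_pos_of_pos ((arsinh_pos_iff.2 hd).trans hx.1)).le

theorem integral_catenoidSlope_div_tanh (hd : 0 < d) (hρ : arsinh d ≤ ρ) :
    ∫ x in Ioc (arsinh d) ρ, catenoidSlope d x / tanh x = arccos (d / sinh ρ) := by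
  rw [← intervalIntegral.integral_of_le hρ,
    intervalIntegral.integral_eq_sub_of_hasDerivAt_of_le hρ
      ((continuousOn_arccos_const_div_sinh hd).mono Icc_subset_Ici_self)
      (fun x hx => hasDerivAt_arccos_const_div_sinh hd hx.1)
      ((intervalIntegrable_iff_integrableOn_Ioc_of_le hρ).2
        (integrableOn_catenoidSlope_div_tanh hd)),
    sinh_arsinh, div_self hd.ne', arccos_one, sub_zero]

theorem integrableOn_catenoidSlope (hd : 0 < d) :
    IntegrableOn (catenoidSlope d) (Ioc (arsinh d) ρ) := by
  have hmeas : Measurable (catenoidSlope d) := by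
    unfold catenoidSlope
    fun_prop
  refine (integrableOn_catenoidSlope_div_tanh hd).mono' hmeas.aestronglyMeasurable ?_
  refine ae_restrict_of_forall_mem measurableSet_Ioc fun x hx => ?_
  rw [norm_of_nonneg (catenoidSlope_nonneg hd.le)]
  exact catenoidSlope_le_div_tanh hd.le ((arsinh_pos_iff.2 hd).trans hx.1)

theorem catenoidHeight_le_arccos (hd : 0 < d) (hρ : arsinh d ≤ ρ) :
    catenoidHeight d ρ ≤ arccos (d / sinh ρ) := by
  rw [← integral_catenoidSlope_div_tanh hd hρ]
  exact setIntegral_mono_on (integrableOn_catenoidSlope hd)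
    (integrableOn_catenoidSlope_div_tanh hd) measurableSet_Ioc fun x hx =>
      catenoidSlope_le_div_tanh hd.le ((arsinh_pos_iff.2 hd).trans hx.1)

theorem tanh_arsinh_mul_arccos_le_catenoidHeight (hd : 0 < d) (hρ : arsinh d ≤ ρ) :
    tanh (arsinh d) * arccos (d / sinh ρ) ≤ catenoidHeight d ρ := by
  rw [← integral_catenoidSlope_div_tanh hd hρ, ← integral_const_mul]
  exact setIntegral_mono_on ((integrableOn_catenoidSlope_div_tanh hd).const_mul _)
    (integrableOn_catenoidSlope hd) measurableSet_Ioc fun x hx =>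
      tanh_arsinh_mul_div_tanh_le_catenoidSlope hd hx.1.le

end Catenoid

theorem compact_catenoid_half_height_tendsto_pi_div_two_general {ρ : ℝ → ℝ} {c : ℝ}
    (hρ : ∀ᶠ d in atTop, arsinh d ≤ ρ d)
    (hc : Tendsto (fun d => d / sinh (ρ d)) atTop (𝓝 c)) :
    Tendsto (fun d => catenoidHeight d (ρ d)) atTop (𝓝 (arccos c)) := by
  have hupper : Tendsto (fun d => arccos (d / sinh (ρ d))) atTop (𝓝 (arccos c)) :=
    (continuous_arccos.tendsto c).comp hc
  have hlower : Tendsto (fun d => tanh (arsinh d) * arccos (d / sinh (ρ d))) atTop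
      (𝓝 (arccos c)) := by
    simpa using tendsto_tanh_arsinh_atTop.mul hupper
  refine tendsto_of_tendsto_of_tendsto_of_le_of_le' hlower hupper ?_ ?_
  · filter_upwards [eventually_gt_atTop 0, hρ] with d hd hρd
    exact tanh_arsinh_mul_arccos_le_catenoidHeight hd hρd
  · filter_upwards [eventually_gt_atTop 0, hρ] with d hd hρd
    exact catenoidHeight_le_arccos hd hρd

theorem compact_catenoid_half_height_tendsto_pi_div_two :
    Filter.Tendsto
      (fun d : ℝ =>
        ∫ x in Set.Ioc (Real.arsinh d) ((3 / 2) * Real.log d),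
          d / Real.sqrt (Real.sinh x ^ 2 - d ^ 2))
      Filter.atTop (nhds (Real.pi / 2)) := by
  have hp : (1 : ℝ) < 3 / 2 := by norm_num
  exact arccos_zero ▸ compact_catenoid_half_height_tendsto_pi_div_two_general
    (eventually_arsinh_le_mul_log hp) (tendsto_div_sinh_mul_log hp)
end

section
/- The function h(d) = ∫_{(arsinh d, ∞)} d / √(sinh² x − d²) dx tends to 0 as d → 0 from the right (limit along positive d tending to 0). -/
open MeasureTheory Filter Real

/-!
Write `d = sinh a` with `a > 0`. For `x > a` the radicand factors as
`sinh x ^ 2 - sinh a ^ 2 = sinh (x + a) * sinh (x - a)`, which at `x = a + t` is at least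
`sinh a * sinh (2 * t) ≥ d * (t * exp t)`. Hence the integrand is at most `√d` times the profile
`1 / √(t * exp t)`, which does not depend on `d` and whose integral over `(0, ∞)` is a Gamma
integral equal to `√(2 * π)`. So the half-height is at most `√(2 * π * d)`.
-/

theorem sinh_sq_sub_sinh_sq (x y : ℝ) :
    sinh x ^ 2 - sinh y ^ 2 = sinh (x + y) * sinh (x - y) := by
  rw [sinh_add, sinh_sub]
  linear_combination sinh y ^ 2 * cosh_sq x - sinh x ^ 2 * cosh_sq y

theorem mul_exp_le_sinh_two_mul {t : ℝ} (ht : 0 ≤ t) : t * exp t ≤ sinh (2 * t) := by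
  have hsinh : t ≤ sinh t := self_le_sinh_iff.2 ht
  have hcosh : exp t ≤ 2 * cosh t := by
    rw [cosh_eq]
    linarith [exp_pos (-t)]
  calc t * exp t ≤ sinh t * (2 * cosh t) := by gcongr
    _ = sinh (2 * t) := by rw [sinh_two_mul]; ring

theorem two_mul_sinh_mul_cosh_le_sinh_add_two_mul {y t : ℝ} (hy : 0 ≤ y) (ht : 0 ≤ t) :
    2 * sinh y * cosh t ≤ sinh (t + 2 * y) := by
  have hsinh_y : 0 ≤ sinh y := sinh_nonneg_iff.2 hy
  have hsinh_t : 0 ≤ sinh t := sinh_nonneg_iff.2 ht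
  have hsinh_two_mul : 2 * sinh y ≤ sinh (2 * y) := by
    rw [sinh_two_mul]
    exact le_mul_of_one_le_right (mul_nonneg zero_le_two hsinh_y) (one_le_cosh y)
  calc 2 * sinh y * cosh t ≤ sinh (2 * y) * cosh t := by gcongr
    _ = cosh t * sinh (2 * y) := mul_comm _ _
    _ ≤ sinh (t + 2 * y) := by
        rw [sinh_add]
        exact le_add_of_nonneg_left (mul_nonneg hsinh_t (cosh_pos _).le)

theorem sinh_mul_sinh_two_mul_sub_le {x y : ℝ} (hy : 0 ≤ y) (hyx : y ≤ x) :
    sinh y * sinh (2 * (x - y)) ≤ sinh x ^ 2 - sinh y ^ 2 := by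
  have hsub : 0 ≤ x - y := sub_nonneg.2 hyx
  calc sinh y * sinh (2 * (x - y)) = 2 * sinh y * cosh (x - y) * sinh (x - y) := by
        rw [sinh_two_mul]; ring
    _ ≤ sinh (x - y + 2 * y) * sinh (x - y) :=
        mul_le_mul_of_nonneg_right (two_mul_sinh_mul_cosh_le_sinh_add_two_mul hy hsub)
          (sinh_nonneg_iff.2 hsub)
    _ = sinh x ^ 2 - sinh y ^ 2 := by rw [sinh_sq_sub_sinh_sq]; ring_nf

theorem div_sqrt_sinh_sq_sub_sq_le {d x : ℝ} (hd : 0 < d) (hx : arsinh d < x) :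
    d / √(sinh x ^ 2 - d ^ 2) ≤ √d * (√((x - arsinh d) * exp (x - arsinh d)))⁻¹ := by
  set t := x - arsinh d
  have ht : 0 < t := sub_pos.2 hx
  have hradicand : d * (t * exp t) ≤ sinh x ^ 2 - d ^ 2 := by
    calc d * (t * exp t) ≤ d * sinh (2 * t) := by
          gcongr
          exact mul_exp_le_sinh_two_mul ht.le
      _ ≤ sinh x ^ 2 - d ^ 2 := by
          simpa only [sinh_arsinh] using
            sinh_mul_sinh_two_mul_sub_le (arsinh_nonneg_iff.2 hd.le) hx.le
  calc d / √(sinh x ^ 2 - d ^ 2) ≤ d / √(d * (t * exp t)) := by gcongr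
    _ = √d * (√(t * exp t))⁻¹ := by
        rw [sqrt_mul hd.le, ← div_div, div_sqrt, div_eq_mul_inv]

theorem integral_Ioi_zero_inv_sqrt_mul_exp :
    ∫ t in Set.Ioi (0 : ℝ), (√(t * exp t))⁻¹ = √(2 * π) := by
  have hrpow : ∀ t ∈ Set.Ioi (0 : ℝ),
      (√(t * exp t))⁻¹ = t ^ ((1 / 2 : ℝ) - 1) * exp (-(1 / 2 * t)) := by
    intro t (ht : 0 < t)
    rw [sqrt_mul ht.le, mul_inv, ← exp_half, ← exp_neg, sqrt_eq_rpow, ← rpow_neg ht.le]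
    ring_nf
  rw [setIntegral_congr_fun measurableSet_Ioi hrpow,
    integral_rpow_mul_exp_neg_mul_Ioi (by norm_num) (by norm_num), one_div_one_div,
    ← sqrt_eq_rpow, Gamma_one_half_eq, ← sqrt_mul zero_le_two]

theorem integral_Ioi_comp_sub_right {E : Type*} [NormedAddCommGroup E] [NormedSpace ℝ E]
    (f : ℝ → E) (a : ℝ) :
    ∫ x in Set.Ioi a, f (x - a) = ∫ t in Set.Ioi 0, f t := by
  simpa only [Set.preimage_sub_const_Ioi, zero_add] using
    (measurePreserving_sub_right volume a).setIntegral_preimage_emb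
      (measurableEmbedding_subRight a) f (Set.Ioi 0)

theorem integral_Ioi_inv_sqrt_sub_mul_exp_sub (a : ℝ) :
    ∫ x in Set.Ioi a, (√((x - a) * exp (x - a)))⁻¹ = √(2 * π) :=
  (integral_Ioi_comp_sub_right (fun t => (√(t * exp t))⁻¹) a).trans
    integral_Ioi_zero_inv_sqrt_mul_exp

theorem integrableOn_inv_sqrt_sub_mul_exp_sub (a : ℝ) :
    IntegrableOn (fun x => (√((x - a) * exp (x - a)))⁻¹) (Set.Ioi a) :=
  Integrable.of_integral_ne_zero <| by
    rw [integral_Ioi_inv_sqrt_sub_mul_exp_sub]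
    positivity

theorem integrableOn_div_sqrt_sinh_sq_sub_sq {d : ℝ} (hd : 0 < d) :
    IntegrableOn (fun x => d / √(sinh x ^ 2 - d ^ 2)) (Set.Ioi (arsinh d)) := by
  refine ((integrableOn_inv_sqrt_sub_mul_exp_sub (arsinh d)).const_mul (√d)).mono'
    (Measurable.aestronglyMeasurable (by fun_prop)) ?_
  filter_upwards [ae_restrict_mem measurableSet_Ioi] with x hx
  rw [norm_of_nonneg (by positivity)]
  exact div_sqrt_sinh_sq_sub_sq_le hd hx

/-- The asymptotic half-height `h(d)` of the rotationally symmetric minimal catenoid `C_d` in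
`ℍ² × ℝ`, meaningful for `d > 0`. -/
noncomputable def catenoidHalfHeight (d : ℝ) : ℝ :=
  ∫ x in Set.Ioi (arsinh d), d / √(sinh x ^ 2 - d ^ 2)

theorem catenoidHalfHeight_nonneg {d : ℝ} (hd : 0 ≤ d) : 0 ≤ catenoidHalfHeight d :=
  integral_nonneg fun _ => by positivity

theorem catenoidHalfHeight_le_sqrt {d : ℝ} (hd : 0 < d) :
    catenoidHalfHeight d ≤ √(2 * π * d) := by
  calc catenoidHalfHeight d
      ≤ ∫ x in Set.Ioi (arsinh d), √d * (√((x - arsinh d) * exp (x - arsinh d)))⁻¹ :=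
        setIntegral_mono_on (integrableOn_div_sqrt_sinh_sq_sub_sq hd)
          ((integrableOn_inv_sqrt_sub_mul_exp_sub (arsinh d)).const_mul (√d)) measurableSet_Ioi
          fun _ hx => div_sqrt_sinh_sq_sub_sq_le hd hx
    _ = √(2 * π * d) := by
        rw [integral_const_mul, integral_Ioi_inv_sqrt_sub_mul_exp_sub, ← sqrt_mul hd.le, mul_comm]

theorem catenoid_half_height_tendsto_zero :
    Filter.Tendsto
      (fun d : ℝ =>
        ∫ x in Set.Ioi (Real.arsinh d),
          d / Real.sqrt (Real.sinh x ^ 2 - d ^ 2))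
      (nhdsWithin 0 (Set.Ioi 0)) (nhds 0) := by
  change Tendsto catenoidHalfHeight (nhdsWithin 0 (Set.Ioi 0)) (nhds 0)
  have hbound : Tendsto (fun d => √(2 * π * d)) (nhdsWithin 0 (Set.Ioi 0)) (nhds 0) := by
    have hcont : Continuous fun d => √(2 * π * d) := by fun_prop
    exact (hcont.tendsto' 0 0 (by simp)).mono_left nhdsWithin_le_nhds
  refine squeeze_zero' ?_ ?_ hbound
  · exact eventually_mem_nhdsWithin.mono fun _ hd => catenoidHalfHeight_nonneg (le_of_lt hd)
  · exact eventually_mem_nhdsWithin.mono fun _ hd => catenoidHalfHeight_le_sqrt hd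
end
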